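/- Let I ⊆ ℝ be an interval and let φ, ψ : I → ℝ be twice differentiable functions satisfying, for all t ∈ I: φ(t) > 0, ψ(t) > 0, φ'(t) ≤ −φ(t), φ''(t) ≤ φ(t), −ψ(t) ≤ ψ'(t) ≤ 0, |ψ''(t)| ≤ −ψ'(t), and (1 − φ'(t)/φ(t))·ψ'(t) ≥ −2·ψ(t). Then for all t ∈ I one has −φ''(t)/φ(t) − 2·(φ'(t)/φ(t))·(ψ'(t)/ψ(t)) + (φ'(t)/φ(t))² ≥ −2. -/

import Mathlib

/-- Lower bound `≥ -2` on the `S¹-direction coefficient of the Ricci curvature of the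
doubly warped product metric `dt² + ψ² g_{T²} + φ² g_{S¹}`, under the
conditions imposed on the warping functions in the paper. -/
theorem stmt3 (I : Set ℝ) (hI : I.OrdConnected)
    (φ φ' φ'' ψ ψ' ψ'' : ℝ → ℝ)
    (hφd : ∀ t ∈ I, HasDerivAt φ (φ' t) t)
    (hφd' : ∀ t ∈ I, HasDerivAt φ' (φ'' t) t)
    (hψd : ∀ t ∈ I, HasDerivAt ψ (ψ' t) t)
    (hψd' : ∀ t ∈ I, HasDerivAt ψ' (ψ'' t) t)
    (hφpos : ∀ t ∈ I, 0 < φ t)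
    (hψpos : ∀ t ∈ I, 0 < ψ t)
    (hφ1 : ∀ t ∈ I, φ' t ≤ -φ t)
    (hφ2 : ∀ t ∈ I, φ'' t ≤ φ t)
    (hψ1 : ∀ t ∈ I, -ψ t ≤ ψ' t)
    (hψ2 : ∀ t ∈ I, ψ' t ≤ 0)
    (hψ3 : ∀ t ∈ I, |ψ'' t| ≤ -ψ' t)
    (hψ4 : ∀ t ∈ I, (1 - φ' t / φ t) * ψ' t ≥ -2 * ψ t) :
    ∀ t ∈ I,
      -(φ'' t) / φ t - 2 * (φ' t / φ t) * (ψ' t / ψ t)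
        + (φ' t / φ t) ^ 2 ≥ -2 := by
  intro t ht
  have hp := hφpos t ht
  have hq := hψpos t ht
  have h1 : φ' t / φ t ≤ -1 := by
    rw [div_le_iff₀ hp]; linarith [hφ1 t ht]
  have h2 : φ'' t / φ t ≤ 1 := by
    rw [div_le_iff₀ hp]; linarith [hφ2 t ht]
  have h3 : -1 ≤ ψ' t / ψ t := by
    rw [le_div_iff₀ hq]; linarith [hψ1 t ht]
  rw [neg_div]
  nlinarith [sq_nonneg (φ' t / φ t + 1),
    mul_nonneg (by linarith : 0 ≤ -(φ' t / φ t)) (by linarith : 0 ≤ ψ' t / ψ t + 1)]
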